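/- arXiv:1605.03042 — 3 statements merged into one kernel-verified Lean document; each statement's English description precedes it below -/
import Mathlib

section
/- Let p ∈ (0,1], let J₁, J₂ be countable index sets, let ω : J₂ × J₁ → (0,∞), let B be a complex linear subspace of the space of all matrices a : J₂ × J₁ → ℂ, let N be a p-quasinorm on B, and let C > 0. Assume: (i) B is complete with respect to the metric d(a,b) = N(a−b)^p; (ii) for every (j₂,j₁) there is C′(j₂,j₁) > 0 with |a(j₂,j₁)| ≤ C′(j₂,j₁)·N(a) for all a ∈ B; (iii) every elementary matrix A_{k₂,k₁} (entry 1 at (k₂,k₁), 0 elsewhere) belongs to B with N(A_{k₂,k₁}) ≤ C·ω(k₂,k₁). Then every matrix a : J₂ × J₁ → ℂ with ∑_{(j₂,j₁)} (|a(j₂,j₁)|·ω(j₂,j₁))^p < ∞ belongs to B and satisfies N(a) ≤ C·(∑_{(j₂,j₁)} (|a(j₂,j₁)|·ω(j₂,j₁))^p)^{1/p}. -/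
open scoped Classical ENNReal

/-!
The triangle inequality for `N ^ p` says that `f ↦ N f ^ p` is a seminorm on the additive group `B`
(not a homogeneous one), complete by assumption. So the expansion `a = ∑ₖ aₖ • Aₖ` into elementary
matrices, which converges absolutely because `N (aₖ • Aₖ) ^ p ≤ C ^ p * (|aₖ| * ωₖ) ^ p`, has a sum
in `B` whose norm is at most the sum of the norms. The coordinates are continuous on `B`, so this
sum agrees with the entrywise one, which is `a`.
-/

section Quasinorm

open Filter Topology

variable {𝕜 E : Type*} [NormedField 𝕜] [AddCommGroup E] [Module 𝕜 E]
  {p : ℝ} {B : Submodule 𝕜 E} {N : E → ℝ}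

/-- `N` restricts to a `p`-quasinorm on the subspace `B`, its values elsewhere being irrelevant.
Neither definiteness of `N` nor `p ≤ 1` is part of the definition. -/
structure IsQuasinormOn (p : ℝ) (B : Submodule 𝕜 E) (N : E → ℝ) : Prop where
  exponent_pos : 0 < p
  nonneg : ∀ f ∈ B, 0 ≤ N f
  map_smul : ∀ (α : 𝕜), ∀ f ∈ B, N (α • f) = ‖α‖ * N f
  rpow_add_le : ∀ f ∈ B, ∀ g ∈ B, N (f + g) ^ p ≤ N f ^ p + N g ^ p

/-- Sequential completeness of `B` for the distance `N (f - g) ^ p` of a `p`-quasinorm `N`. -/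
def IsQuasinormCompleteOn (p : ℝ) (B : Submodule 𝕜 E) (N : E → ℝ) : Prop :=
  ∀ u : ℕ → E, (∀ n, u n ∈ B) →
    (∀ ε : ℝ, 0 < ε → ∃ n₀ : ℕ, ∀ m n : ℕ, n₀ ≤ m → n₀ ≤ n → N (u m - u n) ^ p < ε) →
    ∃ b ∈ B, Tendsto (fun n => N (u n - b) ^ p) atTop (𝓝 0)

namespace IsQuasinormOn

lemma map_zero (hN : IsQuasinormOn p B N) : N 0 = 0 := by
  simpa using hN.map_smul 0 0 B.zero_mem

lemma map_neg (hN : IsQuasinormOn p B N) {f : E} (hf : f ∈ B) : N (-f) = N f := by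
  simpa using hN.map_smul (-1) f hf

/-- The `p`-th power of a `p`-quasinorm, as a seminorm on the additive group `B`. -/
noncomputable def addGroupSeminorm (hN : IsQuasinormOn p B N) : AddGroupSeminorm B where
  toFun f := N f ^ p
  map_zero' := by
    rw [B.coe_zero, hN.map_zero, Real.zero_rpow hN.exponent_pos.ne']
  add_le' f g := hN.rpow_add_le f f.2 g g.2
  neg' f := by rw [B.coe_neg, hN.map_neg f.2]

/-- The additive group `B` with the norm `f ↦ N f ^ p`. -/
noncomputable abbrev seminormedAddCommGroup (hN : IsQuasinormOn p B N) : SeminormedAddCommGroup B :=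
  hN.addGroupSeminorm.toSeminormedAddCommGroup

lemma completeSpace (hN : IsQuasinormOn p B N) (hB : IsQuasinormCompleteOn p B N) :
    letI := hN.seminormedAddCommGroup
    CompleteSpace B := by
  let := hN.seminormedAddCommGroup
  have dist_eq (f g : B) : dist f g = N (f - g) ^ p := dist_eq_norm f g
  refine Metric.complete_of_cauchySeq_tendsto fun u hu => ?_
  obtain ⟨b, hbB, hb⟩ := hB (fun n => u n) (fun n => (u n).2) fun ε hε => by
    obtain ⟨n₀, hn₀⟩ := Metric.cauchySeq_iff.1 hu ε hε
    exact ⟨n₀, fun m n hm hn => dist_eq (u m) (u n) ▸ hn₀ m hm n hn⟩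
  refine ⟨⟨b, hbB⟩, tendsto_iff_dist_tendsto_zero.2 ?_⟩
  simpa only [dist_eq] using hb

lemma continuous_of_bound {F : Type*} [SeminormedAddCommGroup F] (hN : IsQuasinormOn p B N)
    (φ : B →+ F) {C : ℝ} (hφ : ∀ f, ‖φ f‖ ≤ C * N f) :
    letI := hN.seminormedAddCommGroup
    Continuous φ := by
  let := hN.seminormedAddCommGroup
  have eq_norm_rpow (f : B) : N f = ‖f‖ ^ p⁻¹ :=
    (Real.rpow_rpow_inv (hN.nonneg f f.2) hN.exponent_pos.ne').symm
  have tendsto_bound : Tendsto (fun f : B => C * ‖f‖ ^ p⁻¹) (𝓝 0) (𝓝 0) := by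
    have h := (tendsto_norm_zero (E := B)).rpow_const (p := p⁻¹)
      (.inr (inv_nonneg.2 hN.exponent_pos.le))
    simpa [hN.exponent_pos.ne'] using h.const_mul C
  refine continuous_of_continuousAt_zero φ ?_
  rw [ContinuousAt, φ.map_zero]
  exact squeeze_zero_norm (fun f => eq_norm_rpow f ▸ hφ f) tendsto_bound

lemma exists_hasSum_of_summable_rpow {ι F : Type*} [SeminormedAddCommGroup F]
    (hN : IsQuasinormOn p B N) (hB : IsQuasinormCompleteOn p B N)
    {f : ι → E} (hf : ∀ i, f i ∈ B) (hsum : Summable fun i => N (f i) ^ p) :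
    ∃ s ∈ B, N s ^ p ≤ ∑' i, N (f i) ^ p ∧
      ∀ (φ : E →+ F) (C : ℝ), (∀ g ∈ B, ‖φ g‖ ≤ C * N g) → HasSum (fun i => φ (f i)) (φ s) := by
  let := hN.seminormedAddCommGroup
  have := hN.completeSpace hB
  let fB (i : ι) : B := ⟨f i, hf i⟩
  have hnorm : Summable fun i => ‖fB i‖ := hsum
  refine ⟨(∑' i, fB i : B), (∑' i, fB i).2, norm_tsum_le_tsum_norm hnorm, fun φ C hφ => ?_⟩
  let φB : B →+ F := φ.comp B.subtype.toAddMonoidHom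
  exact hnorm.of_norm.hasSum.map φB (hN.continuous_of_bound φB fun g => hφ g g.2)

end IsQuasinormOn

end Quasinorm

lemma IsQuasinormOn.mem_and_rpow_le_tsum_of_hasSum {𝕜 ι κ F : Type*} [NormedField 𝕜]
    [NormedAddCommGroup F] [Module 𝕜 F] {p : ℝ} {B : Submodule 𝕜 (κ → F)} {N : (κ → F) → ℝ}
    (hN : IsQuasinormOn p B N) (hB : IsQuasinormCompleteOn p B N)
    (hcoord : ∀ k, ∃ C : ℝ, ∀ g ∈ B, ‖g k‖ ≤ C * N g)
    {f : ι → κ → F} {a : κ → F} (hf : ∀ i, f i ∈ B) (hsum : Summable fun i => N (f i) ^ p)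
    (ha : HasSum f a) :
    a ∈ B ∧ N a ^ p ≤ ∑' i, N (f i) ^ p := by
  obtain ⟨s, hsB, hs, hφ⟩ := hN.exists_hasSum_of_summable_rpow (F := F) hB hf hsum
  have hsa : s = a := by
    funext k
    obtain ⟨C, hC⟩ := hcoord k
    exact (hφ (Pi.evalAddMonoidHom (fun _ => F) k) C hC).unique (Pi.hasSum.1 ha k)
  exact hsa ▸ ⟨hsB, hs⟩

lemma hasSum_smul_ite_eq {R ι : Type*} [NonAssocSemiring R] [TopologicalSpace R] [DecidableEq ι]
    (a : ι → R) : HasSum (fun k => a k • fun j => if j = k then (1 : R) else 0) a := by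
  refine Pi.hasSum.2 fun j => ?_
  simpa using hasSum_single (f := fun k => a k * if j = k then 1 else 0) j
    fun k hk => by simp [hk.symm]

lemma summable_of_tsum_ofReal_ne_top {ι : Type*} {w : ι → ℝ} (hw : ∀ i, 0 ≤ w i)
    (h : ∑' i, ENNReal.ofReal (w i) ≠ ⊤) : Summable w :=
  (ENNReal.summable_toReal h).congr fun i => ENNReal.toReal_ofReal (hw i)

section Coordinates

variable {𝕜 ι : Type*} [NormedField 𝕜] [DecidableEq ι] {p C : ℝ} {ω : ι → ℝ}
  {B : Submodule 𝕜 (ι → 𝕜)} {N : (ι → 𝕜) → ℝ}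

lemma IsQuasinormOn.mem_and_rpow_le_of_summable
    (hN : IsQuasinormOn p B N) (hB : IsQuasinormCompleteOn p B N)
    (hcoord : ∀ k, ∃ C' : ℝ, ∀ f ∈ B, ‖f k‖ ≤ C' * N f)
    (hω : ∀ k, 0 ≤ ω k) (hC : 0 ≤ C)
    (helem : ∀ k, (fun j => if j = k then (1 : 𝕜) else 0) ∈ B ∧
      N (fun j => if j = k then (1 : 𝕜) else 0) ≤ C * ω k)
    {a : ι → 𝕜} (ha : Summable fun k => (‖a k‖ * ω k) ^ p) :
    a ∈ B ∧ N a ^ p ≤ C ^ p * ∑' k, (‖a k‖ * ω k) ^ p := by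
  let f (k : ι) : ι → 𝕜 := a k • fun j => if j = k then 1 else 0
  have hfB (k) : f k ∈ B := B.smul_mem _ (helem k).1
  have hNf_le (k) : N (f k) ^ p ≤ C ^ p * (‖a k‖ * ω k) ^ p := by
    rw [← Real.mul_rpow hC (mul_nonneg (norm_nonneg _) (hω k)), mul_left_comm]
    refine Real.rpow_le_rpow (hN.nonneg _ (hfB k)) ?_ hN.exponent_pos.le
    rw [hN.map_smul _ _ (helem k).1]
    exact mul_le_mul_of_nonneg_left (helem k).2 (norm_nonneg _)
  have hNf_summable : Summable fun k => N (f k) ^ p :=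
    (ha.mul_left (C ^ p)).of_nonneg_of_le
      (fun k => Real.rpow_nonneg (hN.nonneg _ (hfB k)) p) hNf_le
  obtain ⟨haB, hNa⟩ :=
    hN.mem_and_rpow_le_tsum_of_hasSum hB hcoord hfB hNf_summable (hasSum_smul_ite_eq a)
  refine ⟨haB, ?_⟩
  calc N a ^ p ≤ ∑' k, N (f k) ^ p := hNa
    _ ≤ ∑' k, C ^ p * (‖a k‖ * ω k) ^ p := hNf_summable.tsum_le_tsum hNf_le (ha.mul_left _)
    _ = C ^ p * ∑' k, (‖a k‖ * ω k) ^ p := tsum_mul_left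

theorem matrix_minimality_Up_general
    (hN : IsQuasinormOn p B N) (hB : IsQuasinormCompleteOn p B N)
    (hcoord : ∀ k, ∃ C' : ℝ, ∀ f ∈ B, ‖f k‖ ≤ C' * N f)
    (hω : ∀ k, 0 ≤ ω k) (hC : 0 ≤ C)
    (helem : ∀ k, (fun j => if j = k then (1 : 𝕜) else 0) ∈ B ∧
      N (fun j => if j = k then (1 : 𝕜) else 0) ≤ C * ω k)
    (a : ι → 𝕜) (ha : ∑' k, ENNReal.ofReal ((‖a k‖ * ω k) ^ p) ≠ ⊤) :
    a ∈ B ∧ N a ≤ C * (∑' k, ENNReal.ofReal ((‖a k‖ * ω k) ^ p)).toReal ^ (1 / p) := by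
  have hp := hN.exponent_pos
  have hw (k) : 0 ≤ (‖a k‖ * ω k) ^ p :=
    Real.rpow_nonneg (mul_nonneg (norm_nonneg _) (hω k)) p
  obtain ⟨haB, hNa⟩ := hN.mem_and_rpow_le_of_summable hB hcoord hω hC helem
    (summable_of_tsum_ofReal_ne_top hw ha)
  have hS : 0 ≤ ∑' k, (‖a k‖ * ω k) ^ p := tsum_nonneg hw
  refine ⟨haB, ?_⟩
  simp only [ENNReal.tsum_toReal_eq fun _ => ENNReal.ofReal_ne_top, ENNReal.toReal_ofReal (hw _)]
  calc N a ≤ (C ^ p * ∑' k, (‖a k‖ * ω k) ^ p) ^ p⁻¹ :=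
        (Real.le_rpow_inv_iff_of_pos (hN.nonneg a haB) (by positivity) hp).2 hNa
    _ = C * (∑' k, (‖a k‖ * ω k) ^ p) ^ (1 / p) := by
        rw [Real.mul_rpow (by positivity) hS, Real.rpow_rpow_inv hC hp.ne', one_div]

end Coordinates

/-- Minimality of the weighted matrix class `U^p(ω)`: a complete
time-frequency-style quasi-Banach space `B` of matrices (with coordinate functionals
dominated by `N` and elementary matrices in `B` with `N ≤ C·ω`) contains every matrix
whose weighted `ℓ^p` sum is finite, with the corresponding quasinorm bound. -/
theorem matrix_minimality_Up
    {J₁ J₂ : Type*} [Countable J₁] [Countable J₂] {p : ℝ} (hp : 0 < p) (hp1 : p ≤ 1)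
    (ω : J₂ × J₁ → ℝ) (hω : ∀ jk, 0 < ω jk)
    (B : Submodule ℂ ((J₂ × J₁) → ℂ)) (N : ((J₂ × J₁) → ℂ) → ℝ)
    (hN0 : ∀ f ∈ B, 0 ≤ N f)
    (hNsmul : ∀ (α : ℂ), ∀ f ∈ B, N (α • f) = ‖α‖ * N f)
    (hNadd : ∀ f ∈ B, ∀ g ∈ B, N (f + g) ^ p ≤ N f ^ p + N g ^ p)
    (hcomplete : ∀ u : ℕ → ((J₂ × J₁) → ℂ), (∀ n, u n ∈ B) →
      (∀ ε : ℝ, 0 < ε → ∃ n₀ : ℕ, ∀ m n : ℕ, n₀ ≤ m → n₀ ≤ n → N (u m - u n) ^ p < ε) →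
      ∃ b ∈ B, Filter.Tendsto (fun n => N (u n - b) ^ p) Filter.atTop (nhds 0))
    (hcoord : ∀ k : J₂ × J₁, ∃ C' : ℝ, 0 < C' ∧ ∀ a ∈ B, ‖a k‖ ≤ C' * N a)
    (C : ℝ) (hC : 0 < C)
    (helem : ∀ k : J₂ × J₁,
      (fun jk => if jk = k then (1 : ℂ) else 0) ∈ B ∧
        N (fun jk => if jk = k then (1 : ℂ) else 0) ≤ C * ω k)
    (a : (J₂ × J₁) → ℂ)
    (ha : (∑' jk : J₂ × J₁, ENNReal.ofReal ((‖a jk‖ * ω jk) ^ p)) ≠ ⊤) :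
    a ∈ B ∧
      N a ≤ C * ((∑' jk : J₂ × J₁, ENNReal.ofReal ((‖a jk‖ * ω jk) ^ p)).toReal) ^ (1 / p) :=
  matrix_minimality_Up_general ⟨hp, hN0, hNsmul, hNadd⟩ hcomplete
    (fun k => (hcoord k).imp fun _ h => h.2) (fun k => (hω k).le) hC.le helem a ha
end

section
/- Let p ∈ (0,1], q ∈ (0,∞), let B₁ be a complex vector space equipped with a nonnegative function N₁, and let B₂ be a complex vector space equipped with a p-quasinorm N₂. Let T₁, T₂ : B₁ → B₂ be linear maps with ‖T₁‖ < ∞ and ‖T₂‖ < ∞. Then (∑_{j≥1} σ_j(T₁+T₂)^q)^{1/q} ≤ 2^{(1/p−1) + max(1/q−1, 0) + 1/q}·((∑_{j≥1} σ_j(T₁)^q)^{1/q} + (∑_{j≥1} σ_j(T₂)^q)^{1/q}), where both sides may be +∞ and the sums are unordered sums in [0,∞]. -/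
open scoped ENNReal

noncomputable section

/-- The operator quasinorm `‖T‖ = sup { N₂(T f) : N₁ f ≤ 1 }`, valued in `[0,∞]`. -/
def opQNorm {B₁ B₂ : Type*} [AddCommGroup B₁] [Module ℂ B₁] [AddCommGroup B₂] [Module ℂ B₂]
    (N₁ : B₁ → ℝ) (N₂ : B₂ → ℝ) (T : B₁ →ₗ[ℂ] B₂) : ℝ≥0∞ :=
  ⨆ f : {f : B₁ // N₁ f ≤ 1}, ENNReal.ofReal (N₂ (T f.1))

/-- The `j`-th singular number `σ_j(T) = inf {‖T - T₀‖ : rank T₀ ≤ j - 1}`. -/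
def singNum {B₁ B₂ : Type*} [AddCommGroup B₁] [Module ℂ B₁] [AddCommGroup B₂] [Module ℂ B₂]
    (N₁ : B₁ → ℝ) (N₂ : B₂ → ℝ) (j : ℕ) (T : B₁ →ₗ[ℂ] B₂) : ℝ≥0∞ :=
  ⨅ T₀ : {T₀ : B₁ →ₗ[ℂ] B₂ // LinearMap.rank T₀ ≤ ((j - 1 : ℕ) : Cardinal)},
    opQNorm N₁ N₂ (T - T₀.1)

/-- The Schatten–von Neumann quasinorm of order `q`, `(∑_{j ≥ 1} σ_j(T)^q)^(1/q)`. -/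
def schattenQNorm {B₁ B₂ : Type*} [AddCommGroup B₁] [Module ℂ B₁] [AddCommGroup B₂]
    [Module ℂ B₂] (N₁ : B₁ → ℝ) (N₂ : B₂ → ℝ) (q : ℝ) (T : B₁ →ₗ[ℂ] B₂) : ℝ≥0∞ :=
  (∑' j : ℕ, singNum N₁ N₂ (j + 1) T ^ q) ^ (1 / q)

/-!
Singular numbers satisfy `σ_{m+n-1}(T₁ + T₂) ≤ K (σ_m(T₁) + σ_n(T₂))`, where `K` is the constant in
the quasi-triangle inequality of `N₂`, because approximants of ranks at most `m - 1` and `n - 1` add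
up to one of rank at most `m + n - 2`. Taking `m = n` controls only the odd-indexed singular numbers
of `T₁ + T₂`, but these carry at least half of `∑ σ_j^q` since `j ↦ σ_j` decreases; this costs the
factor `2^{1/q}`. The quasi-triangle inequality of `ℓ^q` costs `2^{max(1/q-1,0)}`, and for a
`p`-quasinorm `K = 2^{1/p-1}`.
-/

theorem le_two_rpow_mul_add_of_rpow_le_add {p a b c : ℝ} (hp : 0 < p) (hp1 : p ≤ 1) (ha : 0 ≤ a)
    (hb : 0 ≤ b) (hc : 0 ≤ c) (h : a ^ p ≤ b ^ p + c ^ p) :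
    a ≤ 2 ^ (1 / p - 1) * (b + c) := by
  lift a to NNReal using ha
  lift b to NNReal using hb
  lift c to NNReal using hc
  norm_cast at h ⊢
  calc a ≤ (b ^ p + c ^ p) ^ (1 / p) := by rwa [one_div, NNReal.le_rpow_inv_iff hp]
    _ ≤ 2 ^ (1 / p - 1) * ((b ^ p) ^ (1 / p) + (c ^ p) ^ (1 / p)) :=
      NNReal.rpow_add_le_mul_rpow_add_rpow _ _ ((one_le_div hp).2 hp1)
    _ = 2 ^ (1 / p - 1) * (b + c) := by
      simp only [one_div, NNReal.rpow_rpow_inv hp.ne']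

theorem Lq_add_le_tsum {ι : Type*} {q : ℝ} (hq : 0 < q) (f g : ι → ℝ≥0∞) :
    (∑' i, (f i + g i) ^ q) ^ (1 / q) ≤
      2 ^ max (1 / q - 1) 0 * ((∑' i, f i ^ q) ^ (1 / q) + (∑' i, g i ^ q) ^ (1 / q)) := by
  let _ : MeasurableSpace ι := ⊤
  have hf : AEMeasurable f .count := measurable_from_top.aemeasurable
  have hg : AEMeasurable g .count := measurable_from_top.aemeasurable
  simp only [← MeasureTheory.lintegral_count]
  rcases le_total 1 q with hq1 | hq1
  · rw [max_eq_right (sub_nonpos.2 ((div_le_one hq).2 hq1)), ENNReal.rpow_zero, one_mul]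
    exact ENNReal.lintegral_Lp_add_le hf hg hq1
  · rw [max_eq_left (sub_nonneg.2 ((one_le_div hq).2 hq1))]
    exact ENNReal.lintegral_Lp_add_le_of_le_one hf hq.le hq1

theorem Lq_const_mul_tsum {ι : Type*} {q : ℝ} (hq : 0 < q) (c : ℝ≥0∞) (f : ι → ℝ≥0∞) :
    (∑' i, (c * f i) ^ q) ^ (1 / q) = c * (∑' i, f i ^ q) ^ (1 / q) := by
  simp only [ENNReal.mul_rpow_of_nonneg _ _ hq.le, ENNReal.tsum_mul_left]
  rw [ENNReal.mul_rpow_of_nonneg _ _ (one_div_nonneg.2 hq.le), one_div,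
    ENNReal.rpow_rpow_inv hq.ne']

theorem tsum_le_two_mul_tsum_even_of_antitone {s : ℕ → ℝ≥0∞} (hs : Antitone s) :
    ∑' n, s n ≤ 2 * ∑' n, s (2 * n) := by
  rw [← tsum_even_add_odd ENNReal.summable ENNReal.summable, two_mul]
  gcongr with n
  exact hs (Nat.le_succ _)

section SingularNumbers

variable {B₁ B₂ : Type*} [AddCommGroup B₁] [Module ℂ B₁] [AddCommGroup B₂] [Module ℂ B₂]
  (N₁ : B₁ → ℝ) (N₂ : B₂ → ℝ)

theorem ofReal_le_opQNorm (T : B₁ →ₗ[ℂ] B₂) {f : B₁} (hf : N₁ f ≤ 1) :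
    ENNReal.ofReal (N₂ (T f)) ≤ opQNorm N₁ N₂ T :=
  le_iSup (fun f : {f : B₁ // N₁ f ≤ 1} ↦ ENNReal.ofReal (N₂ (T f.1))) ⟨f, hf⟩

theorem singNum_succ_le_opQNorm_sub (T : B₁ →ₗ[ℂ] B₂) {T₀ : B₁ →ₗ[ℂ] B₂} {n : ℕ}
    (h : T₀.rank ≤ n) : singNum N₁ N₂ (n + 1) T ≤ opQNorm N₁ N₂ (T - T₀) :=
  iInf_le (fun T₀ : {T₀ : B₁ →ₗ[ℂ] B₂ // T₀.rank ≤ (n : Cardinal)} ↦ opQNorm N₁ N₂ (T - T₀.1))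
    ⟨T₀, h⟩

theorem singNum_antitone (T : B₁ →ₗ[ℂ] B₂) : Antitone fun j ↦ singNum N₁ N₂ j T := by
  intro i j hij
  refine le_iInf fun T₀ ↦ ?_
  have hrank : T₀.1.rank ≤ ((j - 1 : ℕ) : Cardinal) :=
    T₀.2.trans (Nat.cast_le.2 (Nat.sub_le_sub_right hij 1))
  exact iInf_le_of_le ⟨T₀.1, hrank⟩ le_rfl

variable {N₂} {K : ℝ} (hN₂0 : ∀ g, 0 ≤ N₂ g)
  (hN₂add : ∀ g₁ g₂ : B₂, N₂ (g₁ + g₂) ≤ K * (N₂ g₁ + N₂ g₂))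
include hN₂0 hN₂add

theorem opQNorm_add_le (S T : B₁ →ₗ[ℂ] B₂) :
    opQNorm N₁ N₂ (S + T) ≤ ENNReal.ofReal K * (opQNorm N₁ N₂ S + opQNorm N₁ N₂ T) := by
  refine iSup_le fun ⟨f, hf⟩ ↦ ?_
  calc ENNReal.ofReal (N₂ (S f + T f))
      ≤ ENNReal.ofReal (K * (N₂ (S f) + N₂ (T f))) := ENNReal.ofReal_le_ofReal (hN₂add _ _)
    _ = ENNReal.ofReal K * (ENNReal.ofReal (N₂ (S f)) + ENNReal.ofReal (N₂ (T f))) := by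
      rw [ENNReal.ofReal_mul' (add_nonneg (hN₂0 _) (hN₂0 _)),
        ENNReal.ofReal_add (hN₂0 _) (hN₂0 _)]
    _ ≤ ENNReal.ofReal K * (opQNorm N₁ N₂ S + opQNorm N₁ N₂ T) := by
      gcongr <;> exact ofReal_le_opQNorm N₁ N₂ _ hf

theorem singNum_add_le (S T : B₁ →ₗ[ℂ] B₂) (m n : ℕ) :
    singNum N₁ N₂ (m + n + 1) (S + T) ≤
      ENNReal.ofReal K * (singNum N₁ N₂ (m + 1) S + singNum N₁ N₂ (n + 1) T) := by
  have (k : ℕ) : Nonempty {T₀ : B₁ →ₗ[ℂ] B₂ // T₀.rank ≤ ((k + 1 - 1 : ℕ) : Cardinal)} :=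
    ⟨0, by simp⟩
  rw [singNum.eq_def N₁ N₂ (m + 1), singNum.eq_def N₁ N₂ (n + 1), ENNReal.iInf_add,
    ENNReal.mul_iInf fun h ↦ absurd h ENNReal.ofReal_ne_top]
  refine le_iInf fun ⟨S₀, hS₀⟩ ↦ ?_
  rw [ENNReal.add_iInf, ENNReal.mul_iInf fun h ↦ absurd h ENNReal.ofReal_ne_top]
  refine le_iInf fun ⟨T₀, hT₀⟩ ↦ ?_
  have hrank : (S₀ + T₀).rank ≤ ((m + n : ℕ) : Cardinal) := by
    rw [Nat.cast_add]
    exact (LinearMap.rank_add_le _ _).trans (add_le_add hS₀ hT₀)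
  calc singNum N₁ N₂ (m + n + 1) (S + T)
      ≤ opQNorm N₁ N₂ (S + T - (S₀ + T₀)) := singNum_succ_le_opQNorm_sub N₁ N₂ _ hrank
    _ = opQNorm N₁ N₂ ((S - S₀) + (T - T₀)) := by rw [add_sub_add_comm]
    _ ≤ ENNReal.ofReal K * (opQNorm N₁ N₂ (S - S₀) + opQNorm N₁ N₂ (T - T₀)) :=
      opQNorm_add_le N₁ hN₂0 hN₂add _ _

theorem schattenQNorm_add_le_general {q : ℝ} (hq : 0 < q) (T₁ T₂ : B₁ →ₗ[ℂ] B₂) :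
    schattenQNorm N₁ N₂ q (T₁ + T₂) ≤
      ENNReal.ofReal (K * 2 ^ (max (1 / q - 1) 0 + 1 / q)) *
        (schattenQNorm N₁ N₂ q T₁ + schattenQNorm N₁ N₂ q T₂) := by
  let σ (T : B₁ →ₗ[ℂ] B₂) (n : ℕ) : ℝ≥0∞ := singNum N₁ N₂ (n + 1) T
  have hσ : Antitone fun n ↦ σ (T₁ + T₂) n ^ q := fun m n hmn ↦
    ENNReal.rpow_le_rpow (singNum_antitone N₁ N₂ _ (Nat.succ_le_succ hmn)) hq.le
  have hσ_even (n : ℕ) : σ (T₁ + T₂) (2 * n) ≤ ENNReal.ofReal K * (σ T₁ n + σ T₂ n) :=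
    two_mul n ▸ singNum_add_le N₁ hN₂0 hN₂add T₁ T₂ n n
  calc (∑' n, σ (T₁ + T₂) n ^ q) ^ (1 / q)
      ≤ (2 * ∑' n, σ (T₁ + T₂) (2 * n) ^ q) ^ (1 / q) := by
        gcongr; exact tsum_le_two_mul_tsum_even_of_antitone hσ
    _ ≤ (2 * ∑' n, (ENNReal.ofReal K * (σ T₁ n + σ T₂ n)) ^ q) ^ (1 / q) := by
        gcongr with n; exact hσ_even n
    _ = 2 ^ (1 / q) * (ENNReal.ofReal K * (∑' n, (σ T₁ n + σ T₂ n) ^ q) ^ (1 / q)) := by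
        rw [ENNReal.mul_rpow_of_nonneg _ _ (by positivity), Lq_const_mul_tsum hq]
    _ ≤ 2 ^ (1 / q) * (ENNReal.ofReal K *
          (2 ^ max (1 / q - 1) 0 * (schattenQNorm N₁ N₂ q T₁ + schattenQNorm N₁ N₂ q T₂))) := by
        gcongr; exact Lq_add_le_tsum hq _ _
    _ = _ := by
        rw [ENNReal.ofReal_mul' (by positivity), ← ENNReal.ofReal_rpow_of_pos two_pos,
          ENNReal.ofReal_ofNat, ENNReal.rpow_add _ _ two_ne_zero ENNReal.ofNat_ne_top]
        ring

end SingularNumbers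

/-- quasi-triangle inequality for the Schatten–von Neumann quasinorm:
`‖T₁+T₂‖_{I_q} ≤ 2^{(1/p-1) + max(1/q-1,0) + 1/q} (‖T₁‖_{I_q} + ‖T₂‖_{I_q})`. -/
theorem schattenQNorm_add_le
    {p q : ℝ} (hp : 0 < p) (hp1 : p ≤ 1) (hq : 0 < q)
    {B₁ B₂ : Type*} [AddCommGroup B₁] [Module ℂ B₁] [AddCommGroup B₂] [Module ℂ B₂]
    (N₁ : B₁ → ℝ) (hN₁ : ∀ f, 0 ≤ N₁ f)
    (N₂ : B₂ → ℝ) (hN₂0 : ∀ g, 0 ≤ N₂ g)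
    (hN₂smul : ∀ (α : ℂ) (g : B₂), N₂ (α • g) = ‖α‖ * N₂ g)
    (hN₂add : ∀ g₁ g₂ : B₂, N₂ (g₁ + g₂) ^ p ≤ N₂ g₁ ^ p + N₂ g₂ ^ p)
    (T₁ T₂ : B₁ →ₗ[ℂ] B₂)
    (hT₁ : opQNorm N₁ N₂ T₁ ≠ ⊤) (hT₂ : opQNorm N₁ N₂ T₂ ≠ ⊤) :
    schattenQNorm N₁ N₂ q (T₁ + T₂) ≤
      ENNReal.ofReal ((2 : ℝ) ^ ((1 / p - 1) + max (1 / q - 1) 0 + 1 / q)) *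
        (schattenQNorm N₁ N₂ q T₁ + schattenQNorm N₁ N₂ q T₂) := by
  rw [add_assoc, Real.rpow_add two_pos]
  exact schattenQNorm_add_le_general N₁ hN₂0 (fun g₁ g₂ ↦ le_two_rpow_mul_add_of_rpow_le_add hp hp1
    (hN₂0 _) (hN₂0 _) (hN₂0 _) (hN₂add g₁ g₂)) hq T₁ T₂

end
end

section
/- Let p ∈ (0,1], let J₁, J₂ be index sets, let ω₁ : J₁ → (0,∞), ω₂ : J₂ → (0,∞), ω : J₂ × J₁ → (0,∞), and let C₀ > 0 be such that ω₂(j₂)/ω₁(j₁) ≤ C₀·ω(j₂,j₁) for all (j₂,j₁). Let a : J₂ × J₁ → ℂ satisfy M := (∑_{(j₂,j₁)} (|a(j₂,j₁)|·ω(j₂,j₁))^p)^{1/p} < ∞, and let (T_a f)(j₂) = ∑_{j₁} a(j₂,j₁)·f(j₁). Then there exist sequences g_n : J₁ → ℂ and e_n : J₂ → ℂ (n ∈ ℕ) such that: (i) ∑_{n} (‖g_n‖_{ℓ¹_{1/ω₁}(J₁)}·‖e_n‖_{ℓ^p_{ω₂}(J₂)})^p ≤ C₀^p·M^p; and (ii)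 for every f : J₁ → ℂ with ‖f‖_{ℓ^∞_{ω₁}(J₁)} < ∞ one has ‖T_a f − ∑_{n<N} (∑_{j₁} f(j₁)·g_n(j₁))·e_n‖_{ℓ^p_{ω₂}(J₂)} ≤ ε_N·‖f‖_{ℓ^∞_{ω₁}(J₁)} for a sequence ε_N → 0 independent of f. In particular T_a is p-nuclear from ℓ^∞_{ω₁}(J₁) to ℓ^p_{ω₂}(J₂), with p-nuclear quasinorm at most C₀·M. -/
open scoped ENNReal

noncomputable section

/-- Weighted `ℓ^∞` quasinorm `‖f‖ = sup_j |f j| · w j`, valued in `[0,∞]`. -/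
def lInfW {J : Type*} (w : J → ℝ) (f : J → ℂ) : ℝ≥0∞ :=
  ⨆ j, ENNReal.ofReal (‖f j‖ * w j)

/-- Weighted `ℓ^s` quasinorm `‖f‖ = (∑_j (|f j| · w j)^s)^(1/s)`, valued in `[0,∞]`. -/
def lpW {J : Type*} (s : ℝ) (w : J → ℝ) (f : J → ℂ) : ℝ≥0∞ :=
  (∑' j, ENNReal.ofReal (‖f j‖ * w j) ^ s) ^ (1 / s)

/-- Weighted `ℓ¹` norm `‖f‖ = ∑_j |f j| · w j`, valued in `[0,∞]`. -/
def l1W {J : Type*} (w : J → ℝ) (f : J → ℂ) : ℝ≥0∞ :=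
  ∑' j, ENNReal.ofReal (‖f j‖ * w j)

/-!
Write `T_a` as the sum of its single-entry operators: the entry `a s` at `s = (j₂, j₁)` contributes
the rank-one operator built from `g = a s • δ_{j₁}` and `e = δ_{j₂}`, whose cost `‖g‖ * ‖e‖` is
`|a s| * ω₂ j₂ / ω₁ j₁ ≤ C₀ * |a s| * ω s`. Hence the `p`-th powers of the costs sum to at most
`(C₀ * M) ^ p`. Only countably many entries are nonzero, so they can be enumerated by `ℕ`. Since
`p ≤ 1`, the `p`-th power of the `ℓ^p` quasinorm is countably subadditive, so the remainder of a
series of rank-one operators after `N` terms is controlled by the tail of the convergent series of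
`p`-th powers of costs, uniformly on the unit ball.
-/

section WeightedSpaces

variable {ι J : Type*} {p : ℝ} {w : J → ℝ}

theorem rpow_tsum_le_tsum_rpow (hp : 0 < p) (hp1 : p ≤ 1) (x : ι → ℝ≥0∞) :
    (∑' i, x i) ^ p ≤ ∑' i, x i ^ p := by
  rw [← ENNReal.le_rpow_inv_iff hp, ENNReal.tsum_eq_iSup_sum]
  refine iSup_le fun F => (ENNReal.le_rpow_inv_iff hp).2 ?_
  calc (∑ i ∈ F, x i) ^ p
      ≤ ∑ i ∈ F, x i ^ p :=
        Finset.le_sum_of_subadditive (· ^ p) (ENNReal.zero_rpow_of_pos hp).le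
          (fun y z => ENNReal.rpow_add_le_add_rpow y z hp.le hp1) F x
    _ ≤ ∑' i, x i ^ p := ENNReal.sum_le_tsum F

theorem tendsto_tsum_nat_add_rpow_inv (hp : 0 < p) {x : ℕ → ℝ≥0∞} (hx : ∑' n, x n ≠ ⊤) :
    Filter.Tendsto (fun N => (∑' n, x (n + N)) ^ p⁻¹) Filter.atTop (nhds 0) := by
  simpa [hp] using (ENNReal.tendsto_sum_nat_add x hx).ennrpow_const p⁻¹

theorem ofReal_norm_mul {E : Type*} [SeminormedAddGroup E] (z : E) (r : ℝ) :
    ENNReal.ofReal (‖z‖ * r) = ‖z‖ₑ * ENNReal.ofReal r := by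
  rw [ENNReal.ofReal_mul (norm_nonneg z), ofReal_norm]

theorem lpW_rpow (hp : 0 < p) (w : J → ℝ) (f : J → ℂ) :
    lpW p w f ^ p = ∑' j, (‖f j‖ₑ * ENNReal.ofReal (w j)) ^ p := by
  simp only [lpW, ofReal_norm_mul, ← ENNReal.rpow_mul, one_div_mul_cancel hp.ne',
    ENNReal.rpow_one]

theorem lpW_const_mul (hp : 0 < p) (w : J → ℝ) (c : ℂ) (f : J → ℂ) :
    lpW p w (fun j => c * f j) = ‖c‖ₑ * lpW p w f := by
  apply ENNReal.rpow_left_injective hp.ne'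
  beta_reduce
  rw [ENNReal.mul_rpow_of_nonneg _ _ hp.le, lpW_rpow hp,
    lpW_rpow hp, ← ENNReal.tsum_mul_left]
  simp only [enorm_mul, mul_assoc, ENNReal.mul_rpow_of_nonneg _ _ hp.le]

theorem lpW_single [DecidableEq J] (hp : 0 < p) (w : J → ℝ) (k : J) (c : ℂ) :
    lpW p w (Pi.single k c) = ‖c‖ₑ * ENNReal.ofReal (w k) := by
  apply ENNReal.rpow_left_injective hp.ne'
  beta_reduce
  rw [lpW_rpow hp, tsum_eq_single k]
  · rw [Pi.single_eq_same]
  · intro j hj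
    rw [Pi.single_eq_of_ne hj, enorm_zero, zero_mul, ENNReal.zero_rpow_of_pos hp]

theorem l1W_single [DecidableEq J] (w : J → ℝ) (k : J) (c : ℂ) :
    l1W w (Pi.single k c) = ‖c‖ₑ * ENNReal.ofReal (w k) := by
  rw [l1W, tsum_eq_single k]
  · rw [Pi.single_eq_same, ofReal_norm_mul]
  · intro j hj
    rw [Pi.single_eq_of_ne hj, norm_zero, zero_mul, ENNReal.ofReal_zero]

theorem countable_support_of_lpW_ne_top (hp : 0 < p) (hw : ∀ j, 0 < w j) {f : J → ℂ}
    (hf : lpW p w f ≠ ⊤) : (Function.support f).Countable := by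
  have hsum : ∑' j, (‖f j‖ₑ * ENNReal.ofReal (w j)) ^ p ≠ ⊤ :=
    lpW_rpow hp w f ▸ ENNReal.rpow_ne_top_of_nonneg hp.le hf
  refine (Summable.countable_support_ennreal hsum).mono fun j hj => ?_
  have hpos : 0 < ‖f j‖ₑ * ENNReal.ofReal (w j) :=
    ENNReal.mul_pos (enorm_ne_zero.2 hj) (ENNReal.ofReal_pos.2 (hw j)).ne'
  exact (ENNReal.rpow_pos hpos (ENNReal.mul_ne_top enorm_ne_top ENNReal.ofReal_ne_top)).ne'

theorem lpW_tsum_rpow_le (hp : 0 < p) (hp1 : p ≤ 1) (w : J → ℝ) (u : ι → J → ℂ) :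
    lpW p w (fun j => ∑' i, u i j) ^ p ≤ ∑' i, lpW p w (u i) ^ p := by
  simp only [lpW_rpow hp]
  rw [ENNReal.tsum_comm]
  refine ENNReal.tsum_le_tsum fun j => ?_
  calc (‖∑' i, u i j‖ₑ * ENNReal.ofReal (w j)) ^ p
      ≤ (∑' i, ‖u i j‖ₑ * ENNReal.ofReal (w j)) ^ p := by
        rw [ENNReal.tsum_mul_right]
        gcongr
        exact enorm_tsum_le_tsum_enorm
    _ ≤ ∑' i, (‖u i j‖ₑ * ENNReal.ofReal (w j)) ^ p := rpow_tsum_le_tsum_rpow hp hp1 _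

theorem summable_apply_of_tsum_lpW_rpow_ne_top (hp : 0 < p) (hp1 : p ≤ 1) {u : ι → J → ℂ}
    (hu : ∑' i, lpW p w (u i) ^ p ≠ ⊤) {j : J} (hj : 0 < w j) : Summable fun i => u i j := by
  have hle : ((∑' i, ‖u i j‖ₑ) * ENNReal.ofReal (w j)) ^ p ≤ ∑' i, lpW p w (u i) ^ p :=
    calc ((∑' i, ‖u i j‖ₑ) * ENNReal.ofReal (w j)) ^ p
        ≤ ∑' i, (‖u i j‖ₑ * ENNReal.ofReal (w j)) ^ p := by
          rw [← ENNReal.tsum_mul_right]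
          exact rpow_tsum_le_tsum_rpow hp hp1 _
      _ ≤ ∑' i, lpW p w (u i) ^ p :=
          ENNReal.tsum_le_tsum fun i => lpW_rpow hp w (u i) ▸ ENNReal.le_tsum j
  refine Summable.of_enorm fun htop => hu (top_le_iff.1 (hle.trans' ?_))
  rw [htop, ENNReal.top_mul (ENNReal.ofReal_pos.2 hj).ne', ENNReal.top_rpow_of_pos hp]

theorem lpW_tsum_sub_sum_range_rpow_le (hp : 0 < p) (hp1 : p ≤ 1) (hw : ∀ j, 0 < w j)
    {u : ℕ → J → ℂ} (hu : ∑' n, lpW p w (u n) ^ p ≠ ⊤) (N : ℕ) :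
    lpW p w (fun j => ∑' n, u n j - ∑ n ∈ Finset.range N, u n j) ^ p ≤
      ∑' n, lpW p w (u (n + N)) ^ p := by
  have hrem : ∀ j, ∑' n, u n j - ∑ n ∈ Finset.range N, u n j = ∑' n, u (n + N) j := fun j =>
    sub_eq_of_eq_add' <| Eq.symm <| Summable.sum_add_tsum_nat_add N <|
      summable_apply_of_tsum_lpW_rpow_ne_top hp hp1 hu (hw j)
  simp only [hrem]
  exact lpW_tsum_rpow_le hp hp1 w _

theorem tsum_enorm_mul_le (hw : ∀ j, 0 < w j) (f g : J → ℂ) :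
    ∑' j, ‖f j * g j‖ₑ ≤ lInfW w f * l1W (fun j => (w j)⁻¹) g := by
  rw [l1W, ← ENNReal.tsum_mul_left]
  refine ENNReal.tsum_le_tsum fun j => ?_
  calc ‖f j * g j‖ₑ
      = ENNReal.ofReal (‖f j‖ * w j) * ENNReal.ofReal (‖g j‖ * (w j)⁻¹) := by
        have hwj := hw j
        rw [← ENNReal.ofReal_mul (by positivity), ← ofReal_norm, norm_mul]
        field_simp
    _ ≤ lInfW w f * ENNReal.ofReal (‖g j‖ * (w j)⁻¹) := by
        gcongr
        exact le_iSup (fun j => ENNReal.ofReal (‖f j‖ * w j)) j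

theorem summable_norm_mul_of_lInfW_of_l1W (hw : ∀ j, 0 < w j) {f g : J → ℂ}
    (hf : lInfW w f ≠ ⊤) (hg : l1W (fun j => (w j)⁻¹) g ≠ ⊤) :
    Summable fun j => ‖f j * g j‖ :=
  tsum_enorm_ne_top_iff_summable_norm.1 <|
    ne_top_of_le_ne_top (ENNReal.mul_ne_top hf hg) (tsum_enorm_mul_le hw f g)

end WeightedSpaces

theorem comp_extend_zero {ι κ X M : Type*} [Zero X] [Zero M] {F : X → M} (hF : F 0 = 0)
    (c : ι → κ) (u : ι → X) :
    (fun k => F (Function.extend c u 0 k)) = Function.extend c (fun i => F (u i)) 0 := by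
  funext k
  rw [Function.apply_extend F]
  congr 1
  exact funext fun _ => hF

section RankOne

variable {ι J₁ J₂ : Type*} {p : ℝ} {ω₁ : J₁ → ℝ} {ω₂ : J₂ → ℝ}

/-- The rank-one operator `f ↦ ⟨f, g⟩ e`, encoded by the pair `q = (g, e)`, where
`⟨f, g⟩ = ∑ f j₁ * g j₁` is bilinear. -/
def rankOne (q : (J₁ → ℂ) × (J₂ → ℂ)) (f : J₁ → ℂ) (j₂ : J₂) : ℂ :=
  (∑' j₁, f j₁ * q.1 j₁) * q.2 j₂

/-- The cost `‖g‖_{ℓ¹_{1/ω₁}} * ‖e‖_{ℓ^p_{ω₂}}` of the pair `q = (g, e)`: the `p`-nuclear quasinorm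
is obtained from the `ℓ^p` sums of the costs of the terms of a rank-one expansion. -/
def rankOneCost (p : ℝ) (ω₁ : J₁ → ℝ) (ω₂ : J₂ → ℝ) (q : (J₁ → ℂ) × (J₂ → ℂ)) : ℝ≥0∞ :=
  l1W (fun j => (ω₁ j)⁻¹) q.1 * lpW p ω₂ q.2

theorem rankOne_zero : (rankOne 0 : (J₁ → ℂ) → J₂ → ℂ) = 0 := by
  funext f j₂
  simp [rankOne]

theorem rankOneCost_zero (p : ℝ) (ω₁ : J₁ → ℝ) (ω₂ : J₂ → ℝ) : rankOneCost p ω₁ ω₂ 0 = 0 := by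
  simp [rankOneCost, l1W]

theorem lpW_rankOne_le (hp : 0 < p) (hω₁ : ∀ j, 0 < ω₁ j) (ω₂ : J₂ → ℝ)
    (q : (J₁ → ℂ) × (J₂ → ℂ)) (f : J₁ → ℂ) :
    lpW p ω₂ (rankOne q f) ≤ rankOneCost p ω₁ ω₂ q * lInfW ω₁ f :=
  calc lpW p ω₂ (rankOne q f)
      = ‖∑' j₁, f j₁ * q.1 j₁‖ₑ * lpW p ω₂ q.2 := lpW_const_mul hp ω₂ _ q.2
    _ ≤ lInfW ω₁ f * l1W (fun j => (ω₁ j)⁻¹) q.1 * lpW p ω₂ q.2 := by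
        gcongr
        exact enorm_tsum_le_tsum_enorm.trans (tsum_enorm_mul_le hω₁ f q.1)
    _ = rankOneCost p ω₁ ω₂ q * lInfW ω₁ f := by
        rw [rankOneCost]
        ring

theorem tsum_lpW_rankOne_rpow_le (hp : 0 < p) (hω₁ : ∀ j, 0 < ω₁ j) (ω₂ : J₂ → ℝ)
    (q : ι → (J₁ → ℂ) × (J₂ → ℂ)) (f : J₁ → ℂ) :
    ∑' i, lpW p ω₂ (rankOne (q i) f) ^ p ≤
      (∑' i, rankOneCost p ω₁ ω₂ (q i) ^ p) * lInfW ω₁ f ^ p := by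
  rw [← ENNReal.tsum_mul_right]
  refine ENNReal.tsum_le_tsum fun i => ?_
  rw [← ENNReal.mul_rpow_of_nonneg _ _ hp.le]
  exact ENNReal.rpow_le_rpow (lpW_rankOne_le hp hω₁ ω₂ (q i) f) hp.le

theorem tsum_lpW_rankOne_rpow_ne_top (hp : 0 < p) (hω₁ : ∀ j, 0 < ω₁ j)
    {q : ι → (J₁ → ℂ) × (J₂ → ℂ)} (hq : ∑' i, rankOneCost p ω₁ ω₂ (q i) ^ p ≠ ⊤)
    {f : J₁ → ℂ} (hf : lInfW ω₁ f ≠ ⊤) : ∑' i, lpW p ω₂ (rankOne (q i) f) ^ p ≠ ⊤ :=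
  ne_top_of_le_ne_top (ENNReal.mul_ne_top hq (ENNReal.rpow_ne_top_of_nonneg hp.le hf))
    (tsum_lpW_rankOne_rpow_le hp hω₁ ω₂ q f)

theorem lpW_tsum_rankOne_sub_sum_range_le (hp : 0 < p) (hp1 : p ≤ 1) (hω₁ : ∀ j, 0 < ω₁ j)
    (hω₂ : ∀ j, 0 < ω₂ j) {q : ℕ → (J₁ → ℂ) × (J₂ → ℂ)}
    (hq : ∑' n, rankOneCost p ω₁ ω₂ (q n) ^ p ≠ ⊤) {f : J₁ → ℂ} (hf : lInfW ω₁ f ≠ ⊤) (N : ℕ) :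
    lpW p ω₂ (fun j₂ => ∑' n, rankOne (q n) f j₂ -
        ∑ n ∈ Finset.range N, rankOne (q n) f j₂) ≤
      (∑' n, rankOneCost p ω₁ ω₂ (q (n + N)) ^ p) ^ p⁻¹ * lInfW ω₁ f := by
  rw [← ENNReal.rpow_le_rpow_iff hp, ENNReal.mul_rpow_of_nonneg _ _ hp.le,
    ENNReal.rpow_inv_rpow hp.ne']
  exact (lpW_tsum_sub_sum_range_rpow_le hp hp1 hω₂
    (tsum_lpW_rankOne_rpow_ne_top hp hω₁ hq hf) N).trans
    (tsum_lpW_rankOne_rpow_le hp hω₁ ω₂ (fun n => q (n + N)) f)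

end RankOne

section Entries

variable {J₁ J₂ : Type*} [DecidableEq J₁] [DecidableEq J₂] {p : ℝ} {ω₁ : J₁ → ℝ} {ω₂ : J₂ → ℝ}

/-- The pair `(a s • δ_{j₁}, δ_{j₂})`, `s = (j₂, j₁)`, encoding the rank-one operator whose matrix
is the single entry of `a` at `s`. -/
def entryPair (a : J₂ × J₁ → ℂ) (s : J₂ × J₁) : (J₁ → ℂ) × (J₂ → ℂ) :=
  (Pi.single s.2 (a s), Pi.single s.1 1)

theorem l1W_entryPair_fst_ne_top (w : J₁ → ℝ) (a : J₂ × J₁ → ℂ) (s : J₂ × J₁) :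
    l1W w (entryPair a s).1 ≠ ⊤ := by
  rw [entryPair, l1W_single]
  exact ENNReal.mul_ne_top enorm_ne_top ENNReal.ofReal_ne_top

theorem rankOne_entryPair_apply (a : J₂ × J₁ → ℂ) (s : J₂ × J₁) (f : J₁ → ℂ) (j₂ : J₂) :
    rankOne (entryPair a s) f j₂ = if j₂ = s.1 then a s * f s.2 else 0 := by
  have hpair : ∑' j₁, f j₁ * (Pi.single s.2 (a s) : J₁ → ℂ) j₁ = a s * f s.2 := by
    rw [tsum_eq_single s.2 fun j₁ hj₁ => by rw [Pi.single_eq_of_ne hj₁, mul_zero],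
      Pi.single_eq_same, mul_comm]
  calc rankOne (entryPair a s) f j₂
      = a s * f s.2 * (Pi.single s.1 1 : J₂ → ℂ) j₂ := congrArg (· * _) hpair
    _ = if j₂ = s.1 then a s * f s.2 else 0 := by
        rw [Pi.single_apply, mul_ite, mul_one, mul_zero]

theorem hasSum_rankOne_entryPair_iff (a : J₂ × J₁ → ℂ) (f : J₁ → ℂ) (j₂ : J₂) {z : ℂ} :
    HasSum (fun s : Function.support a => rankOne (entryPair a s) f j₂) z ↔
      HasSum (fun j₁ => a (j₂, j₁) * f j₁) z := by
  let entry : J₂ × J₁ → ℂ := fun s => rankOne (entryPair a s) f j₂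
  have hentry : ∀ s, entry s = if j₂ = s.1 then a s * f s.2 else 0 :=
    fun s => rankOne_entryPair_apply a s f j₂
  have hsupport : Function.support entry ⊆ Function.support a := by
    intro s hs has
    exact hs (by simp [hentry, has])
  have hrow : ∀ s ∉ Set.range (Prod.mk j₂), entry s = 0 := by
    intro s hs
    rw [hentry, if_neg]
    rintro rfl
    exact hs ⟨s.2, rfl⟩
  calc HasSum (fun s : Function.support a => entry s) z
      ↔ HasSum entry z := hasSum_subtype_iff_of_support_subset hsupport
    _ ↔ HasSum (entry ∘ Prod.mk j₂) z := ((Prod.mk_right_injective j₂).hasSum_iff hrow).symm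
    _ ↔ HasSum (fun j₁ => a (j₂, j₁) * f j₁) z := by
        simp only [Function.comp_def, hentry, if_true]

theorem rankOneCost_entryPair (hp : 0 < p) (ω₁ : J₁ → ℝ) (ω₂ : J₂ → ℝ) (a : J₂ × J₁ → ℂ)
    (s : J₂ × J₁) :
    rankOneCost p ω₁ ω₂ (entryPair a s) =
      ‖a s‖ₑ * (ENNReal.ofReal (ω₁ s.2)⁻¹ * ENNReal.ofReal (ω₂ s.1)) := by
  rw [rankOneCost, entryPair, l1W_single, lpW_single hp, enorm_one, one_mul, mul_assoc]

theorem tsum_rankOneCost_entryPair_rpow_le (hp : 0 < p) (hω₁ : ∀ j, 0 ≤ ω₁ j)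
    {ω : J₂ × J₁ → ℝ} {C₀ : ℝ} (hC₀ : 0 ≤ C₀)
    (hdom : ∀ j₂ j₁, ω₂ j₂ / ω₁ j₁ ≤ C₀ * ω (j₂, j₁)) (a : J₂ × J₁ → ℂ) :
    ∑' s, rankOneCost p ω₁ ω₂ (entryPair a s) ^ p ≤ (ENNReal.ofReal C₀ * lpW p ω a) ^ p := by
  rw [ENNReal.mul_rpow_of_nonneg _ _ hp.le, lpW_rpow hp, ← ENNReal.tsum_mul_left]
  refine ENNReal.tsum_le_tsum fun s => ?_
  have hweight : ENNReal.ofReal (ω₁ s.2)⁻¹ * ENNReal.ofReal (ω₂ s.1) ≤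
      ENNReal.ofReal C₀ * ENNReal.ofReal (ω s) := by
    rw [← ENNReal.ofReal_mul (inv_nonneg.2 (hω₁ s.2)), ← ENNReal.ofReal_mul hC₀, inv_mul_eq_div]
    exact ENNReal.ofReal_le_ofReal (hdom s.1 s.2)
  rw [← ENNReal.mul_rpow_of_nonneg _ _ hp.le, rankOneCost_entryPair hp,
    mul_left_comm (ENNReal.ofReal C₀)]
  exact ENNReal.rpow_le_rpow (mul_le_mul_right hweight _) hp.le

/-- The single-entry pairs of `a`, listed along an injective `code` of the support of `a`; positions
that code no entry hold the zero pair. -/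
def entrySeries (a : J₂ × J₁ → ℂ) (code : Function.support a → ℕ) : ℕ → (J₁ → ℂ) × (J₂ → ℂ) :=
  Function.extend code (fun s => entryPair a s) 0

variable {a : J₂ × J₁ → ℂ} {code : Function.support a → ℕ}

theorem l1W_entrySeries_fst_ne_top (w : J₁ → ℝ) (n : ℕ) :
    l1W w (entrySeries a code n).1 ≠ ⊤ := by
  classical
  rw [entrySeries, Function.extend_def]
  split_ifs
  · exact l1W_entryPair_fst_ne_top w a _
  · simp [l1W]

theorem hasSum_rankOne_entrySeries_iff (hcode : Function.Injective code) (f : J₁ → ℂ) (j₂ : J₂)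
    {z : ℂ} : HasSum (fun n => rankOne (entrySeries a code n) f j₂) z ↔
      HasSum (fun j₁ => a (j₂, j₁) * f j₁) z := by
  have hzero : rankOne (0 : (J₁ → ℂ) × (J₂ → ℂ)) f j₂ = 0 := by rw [rankOne_zero]; rfl
  simp only [entrySeries, comp_extend_zero (F := (rankOne · f j₂)) hzero]
  rw [hasSum_extend_zero hcode, hasSum_rankOne_entryPair_iff]

theorem tsum_rankOneCost_entrySeries_rpow_le (hp : 0 < p) (hω₁ : ∀ j, 0 ≤ ω₁ j)
    {ω : J₂ × J₁ → ℝ} {C₀ : ℝ} (hC₀ : 0 ≤ C₀)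
    (hdom : ∀ j₂ j₁, ω₂ j₂ / ω₁ j₁ ≤ C₀ * ω (j₂, j₁)) (hcode : Function.Injective code) :
    ∑' n, rankOneCost p ω₁ ω₂ (entrySeries a code n) ^ p ≤
      (ENNReal.ofReal C₀ * lpW p ω a) ^ p := by
  have hzero : rankOneCost p ω₁ ω₂ 0 ^ p = 0 := by
    rw [rankOneCost_zero, ENNReal.zero_rpow_of_pos hp]
  calc ∑' n, rankOneCost p ω₁ ω₂ (entrySeries a code n) ^ p
      = ∑' s : Function.support a, rankOneCost p ω₁ ω₂ (entryPair a s) ^ p := by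
        simp only [entrySeries, comp_extend_zero (F := (rankOneCost p ω₁ ω₂ · ^ p)) hzero]
        exact tsum_extend_zero hcode _
    _ ≤ ∑' s, rankOneCost p ω₁ ω₂ (entryPair a s) ^ p :=
        ENNReal.tsum_comp_le_tsum_of_injective Subtype.val_injective _
    _ ≤ (ENNReal.ofReal C₀ * lpW p ω a) ^ p :=
        tsum_rankOneCost_entryPair_rpow_le hp hω₁ hC₀ hdom a

end Entries

/-- a matrix `a` in the weighted class `U^p(ω)` induces a `p`-nuclear matrix
operator `T_a` from `ℓ^∞_{ω₁}(J₁)` to `ℓ^p_{ω₂}(J₂)`: there is a rank-one expansion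
`T_a = ∑_n ⟨·, g_n⟩ e_n` with `∑_n (‖g_n‖_{ℓ¹_{1/ω₁}}·‖e_n‖_{ℓ^p_{ω₂}})^p ≤ C₀^p·M^p`,
converging uniformly on bounded sets; hence the `p`-nuclear quasinorm is at most `C₀·M`. -/
theorem matrix_operator_nuclear
    {p : ℝ} (hp : 0 < p) (hp1 : p ≤ 1)
    {J₁ J₂ : Type*} (ω₁ : J₁ → ℝ) (ω₂ : J₂ → ℝ) (ω : J₂ × J₁ → ℝ)
    (hω₁ : ∀ j, 0 < ω₁ j) (hω₂ : ∀ j, 0 < ω₂ j) (hω : ∀ jk, 0 < ω jk)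
    (C₀ : ℝ) (hC₀ : 0 < C₀)
    (hdom : ∀ (j₂ : J₂) (j₁ : J₁), ω₂ j₂ / ω₁ j₁ ≤ C₀ * ω (j₂, j₁))
    (a : J₂ × J₁ → ℂ) (hM : lpW p ω a ≠ ⊤) :
    ∃ (g : ℕ → J₁ → ℂ) (e : ℕ → J₂ → ℂ),
      (∑' n : ℕ, (l1W (fun j => (ω₁ j)⁻¹) (g n) * lpW p ω₂ (e n)) ^ p ≤
        (ENNReal.ofReal C₀ * lpW p ω a) ^ p) ∧
      ∃ ε : ℕ → ℝ≥0∞, Filter.Tendsto ε Filter.atTop (nhds 0) ∧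
        ∀ f : J₁ → ℂ, lInfW ω₁ f ≠ ⊤ →
          (∀ j₂ : J₂, Summable fun j₁ => ‖a (j₂, j₁) * f j₁‖) ∧
          (∀ n : ℕ, Summable fun j₁ => ‖f j₁ * g n j₁‖) ∧
          ∀ N : ℕ,
            lpW p ω₂ (fun j₂ => (∑' j₁, a (j₂, j₁) * f j₁) -
                ∑ n ∈ Finset.range N, (∑' j₁, f j₁ * g n j₁) * e n j₂) ≤
              ε N * lInfW ω₁ f := by
  classical
  have : Countable (Function.support a) := countable_support_of_lpW_ne_top hp hω hM
  obtain ⟨code, hcode⟩ := exists_injective_nat (Function.support a)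
  let q := entrySeries a code
  have hcost : ∑' n, rankOneCost p ω₁ ω₂ (q n) ^ p ≤ (ENNReal.ofReal C₀ * lpW p ω a) ^ p :=
    tsum_rankOneCost_entrySeries_rpow_le hp (fun j => (hω₁ j).le) hC₀.le hdom hcode
  have hfin : ∑' n, rankOneCost p ω₁ ω₂ (q n) ^ p ≠ ⊤ := ne_top_of_le_ne_top
    (ENNReal.rpow_ne_top_of_nonneg hp.le (ENNReal.mul_ne_top ENNReal.ofReal_ne_top hM)) hcost
  refine ⟨fun n => (q n).1, fun n => (q n).2, hcost, _, tendsto_tsum_nat_add_rpow_inv hp hfin,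
    fun f hf => ?_⟩
  have hrow : ∀ j₂, HasSum (fun j₁ => a (j₂, j₁) * f j₁) (∑' n, rankOne (q n) f j₂) := fun j₂ =>
    (hasSum_rankOne_entrySeries_iff hcode f j₂).1 <| Summable.hasSum <|
      summable_apply_of_tsum_lpW_rpow_ne_top hp hp1
        (tsum_lpW_rankOne_rpow_ne_top hp hω₁ hfin hf) (hω₂ j₂)
  refine ⟨fun j₂ => (hrow j₂).summable.norm, fun n =>
    summable_norm_mul_of_lInfW_of_l1W hω₁ hf (l1W_entrySeries_fst_ne_top _ n), fun N => ?_⟩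
  simp only [(hrow _).tsum_eq]
  exact lpW_tsum_rankOne_sub_sum_range_le hp hp1 hω₁ hω₂ hfin hf N

end
end
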